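/- Let A be a finite commutative unitary ring with A ≠ {0} and characteristic 2. Then there exists an irreducible λ-quiddity over A of size 4, and every irreducible λ-quiddity over A has size at most |SL₂(A)|/|A| + 2. -/

import Mathlib

/-!
The tuple `(0,0,0,0)` is a λ-quiddity. A size-4 tuple can only be reducible through two tuples of
size 3, and a λ-quiddity of size 3 has middle entry `±1`; since all entries of `(0,0,0,0)` vanish,
it is irreducible.

For the bound, let `U` be the subgroup of lower unitriangular matrices, which has `|A|` elements,
and put `N = |SL₂(A)| / |A|`. If a λ-quiddity `(c₁,…,cₙ)` has `n ≥ N + 3`, then among the `N + 1`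
prefix products `P₀, …, P_N` two of them, say `P_i` and `P_j` with `i < j`, lie in the same coset of
`U` (`exists_segment`). Hence `M(c_{i+1},…,c_j) = P_j P_i⁻¹ = [[1,0],[x,1]]` for some `x`, which
makes `(0, c_{i+1}, …, c_j, x)` a λ-quiddity. As at least three entries lie outside the segment,
it splits off from a rotation of `c` (`isReducible_of_segment`), so `c` is reducible.
This argument works in any characteristic.
-/

/-- The matrix `[[a, -1], [1, 0]]`. -/
def mMat {A : Type*} [CommRing A] (a : A) : Matrix (Fin 2) (Fin 2) A := !![a, -1; 1, 0]

/-- `M_n(a₁, …, aₙ) = mMat aₙ * ⋯ * mMat a₁`, for the tuple given as a list `[a₁, …, aₙ]`. -/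
def mProd {A : Type*} [CommRing A] (l : List A) : Matrix (Fin 2) (Fin 2) A :=
  ((l.map mMat).reverse).prod

/-- The sum `(a₁,…,aₙ) ⊕ (b₁,…,b_m) = (a₁+b_m, a₂,…,a_{n−1}, aₙ+b₁, b₂,…,b_{m−1})`. -/
def oplus {A : Type*} [CommRing A] (a b : List A) : List A :=
  (a.headD 0 + b.getLastD 0) ::
    (a.dropLast.tail ++ (a.getLastD 0 + b.headD 0) :: b.dropLast.tail)

/-- Two tuples are equivalent if one is a cyclic rotation of the other or of its reversal. -/
def TupEquiv {A : Type*} (a b : List A) : Prop :=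
  (∃ k, b = a.rotate k) ∨ (∃ k, b = a.reverse.rotate k)

/-- A λ-quiddity over `R ⊆ A`: all entries lie in `R` and `M_n(a₁,…,aₙ) = ± Id`. -/
def IsQuiddity {A : Type*} [CommRing A] (R : Set A) (c : List A) : Prop :=
  (∀ x ∈ c, x ∈ R) ∧ (mProd c = 1 ∨ mProd c = -1)

/-- A λ-quiddity `c` over `R` is reducible if `c ∼ a ⊕ b` with `a ∈ R^m`, `m ≥ 3`,
and `b` a λ-quiddity over `R` of size `l ≥ 3`. -/
def IsReducible {A : Type*} [CommRing A] (R : Set A) (c : List A) : Prop :=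
  ∃ a b : List A, 3 ≤ a.length ∧ 3 ≤ b.length ∧ (∀ x ∈ a, x ∈ R) ∧
    IsQuiddity R b ∧ TupEquiv c (oplus a b)

/-- An irreducible λ-quiddity over `R`: a λ-quiddity of size `≥ 3` which is not reducible. -/
def IrreducibleQuiddity {A : Type*} [CommRing A] (R : Set A) (c : List A) : Prop :=
  IsQuiddity R c ∧ 3 ≤ c.length ∧ ¬ IsReducible R c

/-- The continuant `K_i(a₁,…,a_i)`, determinant of the tridiagonal matrix with diagonal
`a₁,…,a_i` and off-diagonal entries `1`; `K₀ = 1`. -/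
def cont {A : Type*} [CommRing A] : List A → A
  | [] => 1
  | [a] => a
  | a :: b :: l => a * cont (b :: l) - cont l

lemma mProd_append {A : Type*} [CommRing A] (l₁ l₂ : List A) :
    mProd (l₁ ++ l₂) = mProd l₂ * mProd l₁ := by
  simp [mProd]

lemma mProd_cons {A : Type*} [CommRing A] (x : A) (l : List A) :
    mProd (x :: l) = mProd l * mMat x := by
  simp [mProd]

lemma mProd_nil {A : Type*} [CommRing A] : mProd ([] : List A) = 1 := by
  simp [mProd]

lemma det_mProd {A : Type*} [CommRing A] (l : List A) : (mProd l).det = 1 := by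
  induction l with
  | nil => simp [mProd_nil]
  | cons x l ih => rw [mProd_cons, Matrix.det_mul, ih]; simp [mMat, Matrix.det_fin_two]

/-- The lower unitriangular matrix `[[1, 0], [x, 1]]`. -/
def lowerUni {A : Type*} [CommRing A] (x : A) : Matrix (Fin 2) (Fin 2) A := !![1, 0; x, 1]

lemma det_lowerUni {A : Type*} [CommRing A] (x : A) : (lowerUni x).det = 1 := by
  simp [lowerUni, Matrix.det_fin_two]

lemma lowerUni_mul {A : Type*} [CommRing A] (x y : A) :
    lowerUni x * lowerUni y = lowerUni (x + y) := by
  simp [lowerUni]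

lemma lowerUni_zero {A : Type*} [CommRing A] : lowerUni (0 : A) = 1 := by
  simp [lowerUni, Matrix.one_fin_two]

lemma lowerUni_injective {A : Type*} [CommRing A] :
    Function.Injective (lowerUni : A → Matrix (Fin 2) (Fin 2) A) := by
  intro x y h
  simpa [lowerUni] using congrFun (congrFun h 1) 0

/-- A segment whose product is lower unitriangular extends by one entry on each side to a
λ-quiddity, because `mMat x * [[1, 0], [x, 1]] = mMat 0` and `mMat 0 ^ 2 = -1`. -/
lemma mProd_extend {A : Type*} [CommRing A] {s : List A} {x : A} (h : mProd s = lowerUni x) :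
    mProd (0 :: (s ++ [x])) = -1 := by
  rw [mProd_cons, mProd_append, h, mProd_cons, mProd_nil]
  ext i j
  fin_cases i <;> fin_cases j <;> simp [mMat, lowerUni]

/-- If the product of a nonempty segment `s` is lower unitriangular and at least three entries
remain outside of `s`, then the tuple is reducible. -/
lemma isReducible_of_segment {A : Type*} [CommRing A] {p s t : List A} {x : A}
    (hs : s ≠ []) (hlen : 3 ≤ (t ++ p).length) (h : mProd s = lowerUni x) :
    IsReducible Set.univ (p ++ s ++ t) := by
  obtain ⟨d₁, r, hr⟩ := List.exists_cons_of_length_pos (l := t ++ p) (by omega)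
  have hr0 : r ≠ [] := by rintro rfl; simp [hr] at hlen
  -- The summand `a` is the complement `t ++ p` with the last entry of `b` subtracted from its head.
  refine ⟨(d₁ - x) :: r, 0 :: (s ++ [x]), ?_, ?_, fun _ _ => Set.mem_univ _,
    ⟨fun _ _ => Set.mem_univ _, Or.inr (mProd_extend h)⟩, Or.inl ⟨(p ++ s).length, ?_⟩⟩
  · rw [hr] at hlen; simpa using hlen
  · have := List.length_pos_of_ne_nil hs
    simp; omega
  · rw [List.rotate_append_length_eq, ← List.append_assoc, hr]
    obtain ⟨q, z, rfl⟩ := List.eq_nil_or_concat r |>.resolve_left hr0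
    have e1 : ∀ (u v : A) (l : List A), (u :: (l ++ [v])).getLastD 0 = v := by
      intro u v l; rw [← List.cons_append, List.getLastD_eq_getLast?, List.getLast?_concat]; rfl
    have e2 : ∀ (u v : A) (l : List A), (u :: (l ++ [v])).dropLast = u :: l := by
      intro u v l; rw [← List.cons_append, List.dropLast_concat]
    simp only [List.concat_eq_append, oplus, e1, e2]
    simp

/-- Pigeonhole on the cosets of the lower unitriangular subgroup: among the prefix products of
index at most `|SL₂(A)| / |A|`, two differ by a lower unitriangular matrix. -/
lemma exists_segment {A : Type*} [CommRing A] [Fintype A] [Nontrivial A] (c : List A) :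
    ∃ i j, i < j ∧ j ≤ Nat.card (Matrix.SpecialLinearGroup (Fin 2) A) / Nat.card A ∧
      ∃ x, mProd (c.take j) = lowerUni x * mProd (c.take i) := by
  set N := Nat.card (Matrix.SpecialLinearGroup (Fin 2) A) / Nat.card A with hN
  let f : Fin (N + 1) × A → Matrix.SpecialLinearGroup (Fin 2) A := fun q =>
    ⟨lowerUni q.2 * mProd (c.take q.1), by rw [Matrix.det_mul, det_lowerUni, det_mProd, one_mul]⟩
  have hf : ¬ Function.Injective f := by
    intro hinj
    have h1 := Nat.card_le_card_of_injective f hinj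
    rw [Nat.card_prod, Nat.card_fin, ← Nat.le_div_iff_mul_le Nat.card_pos] at h1
    omega
  -- Moving a unitriangular factor across an equality of two translated prefix products.
  have move : ∀ {a b : A} {P Q : Matrix (Fin 2) (Fin 2) A},
      lowerUni a * P = lowerUni b * Q → Q = lowerUni (-b + a) * P := by
    intro a b P Q h
    rw [← lowerUni_mul, mul_assoc, h, ← mul_assoc, lowerUni_mul, neg_add_cancel, lowerUni_zero,
      one_mul]
  simp only [Function.Injective, not_forall] at hf
  obtain ⟨⟨i, a⟩, ⟨j, b⟩, h, hne⟩ := hf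
  have h' : lowerUni a * mProd (c.take i) = lowerUni b * mProd (c.take j) :=
    congrArg Subtype.val h
  rcases lt_trichotomy i j with hij | rfl | hij
  · exact ⟨i, j, hij, by omega, _, move h'⟩
  · refine absurd ?_ hne
    have hu : IsUnit (mProd (c.take i)) := by
      rw [Matrix.isUnit_iff_isUnit_det, det_mProd]; exact isUnit_one
    rw [lowerUni_injective (hu.mul_right_cancel h')]
  · exact ⟨j, i, hij, by omega, _, move h'.symm⟩

lemma isReducible_of_length {A : Type*} [CommRing A] [Fintype A] [Nontrivial A] (c : List A)
    (hc : Nat.card (Matrix.SpecialLinearGroup (Fin 2) A) / Nat.card A + 2 < c.length) :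
    IsReducible Set.univ c := by
  obtain ⟨i, j, hij, hj, x, hx⟩ := exists_segment c
  have hsplit : c.take j = c.take i ++ (c.take j).drop i := by
    conv_lhs => rw [← List.take_append_drop i (c.take j)]
    rw [List.take_take, min_eq_left hij.le]
  have hu : IsUnit (mProd (c.take i)) := by
    rw [Matrix.isUnit_iff_isUnit_det, det_mProd]; exact isUnit_one
  have hseg : mProd ((c.take j).drop i) = lowerUni x := by
    refine hu.mul_right_cancel ?_
    rw [← mProd_append, ← hsplit, hx]
  have := isReducible_of_segment (p := c.take i) (t := c.drop j) (x := x)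
    (s := (c.take j).drop i) ?_ ?_ hseg
  · rwa [← hsplit, List.take_append_drop] at this
  · apply List.ne_nil_of_length_pos
    simp; omega
  · simp; omega

lemma irreducible_zero {A : Type*} [CommRing A] [Nontrivial A] :
    IrreducibleQuiddity Set.univ [(0 : A), 0, 0, 0] := by
  refine ⟨⟨fun _ _ => Set.mem_univ _, Or.inl ?_⟩, by simp, ?_⟩
  · simp [mProd, mMat, Matrix.one_fin_two]
  · rintro ⟨a, b, ha, hb, -, ⟨-, hq⟩, he⟩
    -- Rotations and reversals of a constant tuple are that same tuple.
    have h0 : oplus a b = [0, 0, 0, 0] := by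
      have hrep : [(0 : A), 0, 0, 0] = List.replicate 4 0 := rfl
      rw [hrep] at he ⊢
      rcases he with ⟨k, hk⟩ | ⟨k, hk⟩
      · rw [hk, List.rotate_replicate]
      · rw [hk, List.reverse_replicate, List.rotate_replicate]
    have hl := congrArg List.length h0
    simp [oplus] at hl
    obtain ⟨a₁, a₂, a₃, rfl⟩ := List.length_eq_three.1 (show a.length = 3 by omega)
    obtain ⟨b₁, b₂, b₃, rfl⟩ := List.length_eq_three.1 (show b.length = 3 by omega)
    have hb2 : b₂ = 0 := by
      simp [oplus] at h0
      exact h0.2.2.2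
    subst hb2
    -- The bottom-right entry of `M₃(b₁, b₂, b₃)` is `-b₂`.
    rcases hq with hq | hq <;>
      simpa [mProd, mMat] using congrFun (congrFun hq 1) 1

/-- Over a finite nontrivial commutative ring of characteristic 2, there is an irreducible
λ-quiddity of size 4 and every irreducible λ-quiddity has size at most `|SL₂(A)|/|A| + 2`. -/
theorem stmt1 {A : Type*} [CommRing A] [Fintype A] [Nontrivial A]
    (hchar : ringChar A = 2) :
    (∃ c : List A, IrreducibleQuiddity Set.univ c ∧ c.length = 4) ∧
    (∀ c : List A, IrreducibleQuiddity Set.univ c →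
      c.length ≤ Nat.card (Matrix.SpecialLinearGroup (Fin 2) A) / Nat.card A + 2) := by
  refine ⟨⟨_, irreducible_zero, rfl⟩, fun c hc => ?_⟩
  by_contra! h
  exact hc.2.2 (isReducible_of_length c h)
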